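/- Let R be a regular Noetherian ring (every localization of R at a prime ideal is a regular local ring). Then for all finitely generated R-modules N ⊆ M, the robust closure of N in M equals N. -/

import Mathlib

set_option synthInstance.maxHeartbeats 1000000
set_option maxHeartbeats 1000000
open scoped BigOperators ENNReal TensorProduct

universe u

/-- A filtration of `M` of length `h` whose factors are cyclic modules killed by `J`. -/
def HasQLFiltration (S : Type u) [CommRing S] (J : Ideal S)
    (M : Type u) [AddCommGroup M] [Module S M] (h : ℕ) : Prop :=
  ∃ c : Fin (h + 1) → Submodule S M,
    Monotone c ∧ c 0 = ⊥ ∧ c (Fin.last h) = ⊤ ∧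
    ∀ i : Fin h,
      (∃ m : M, c i.succ = c i.castSucc ⊔ Submodule.span S {m}) ∧
      ∀ a ∈ J, ∀ x ∈ c i.succ, a • x ∈ c i.castSucc

/-- The `J`-quasilength of `M`. -/
noncomputable def quasilength (S : Type u) [CommRing S] (J : Ideal S)
    (M : Type u) [AddCommGroup M] [Module S M] : ℕ∞ :=
  sInf {n : ℕ∞ | ∃ h : ℕ, n = (h : ℕ∞) ∧ HasQLFiltration S J M h}

/-- `x₁, …, x_d` is a Q-sequence in `S`. -/
def IsQSequence {d : ℕ} {S : Type u} [CommRing S] (x : Fin d → S) : Prop :=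
  Ideal.span (Set.range x) ≠ ⊤ ∧
  ∀ t : ℕ, 0 < t →
    ((t : ℕ∞) ^ d) ≤ quasilength S (Ideal.span (Set.range x))
      (S ⧸ Ideal.span (Set.range fun i => x i ^ t))

/-- `T` is a robust algebra over the (complete local domain) `D`: the image in `T`
of every system of parameters of `D` is a Q-sequence in `T`. -/
def IsRobustOver (D : Type u) [CommRing D] (T : Type u) [CommRing T] [Algebra D T] : Prop :=
  ∀ (d : ℕ) (x : Fin d → D), ringKrullDim D = d →
    (Ideal.span (Set.range x)).radical.IsMaximal →
    IsQSequence (fun i => algebraMap D T (x i))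

/-- `D` is a complete local domain of `R`, i.e. `D ≅ (R_m)^∧ / q` (compatibly with the
structure maps) for some maximal ideal `m` of `R` and minimal prime `q` of `(R_m)^∧`. -/
def IsCompleteLocalDomainOf (R : Type u) [CommRing R] (D : Type u) [CommRing D]
    [Algebra R D] : Prop :=
  ∃ (m : Ideal R) (hm : m.IsMaximal),
    haveI : m.IsPrime := hm.isPrime
    ∃ q ∈ minimalPrimes (AdicCompletion (IsLocalRing.maximalIdeal (Localization.AtPrime m))
        (Localization.AtPrime m)),
      ∃ e : D ≃+* (AdicCompletion (IsLocalRing.maximalIdeal (Localization.AtPrime m))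
          (Localization.AtPrime m) ⧸ q),
        ∀ r : R, e (algebraMap R D r) =
          Ideal.Quotient.mk q (algebraMap (Localization.AtPrime m)
            (AdicCompletion (IsLocalRing.maximalIdeal (Localization.AtPrime m))
              (Localization.AtPrime m)) (algebraMap R (Localization.AtPrime m) r))

/-- `T` is a robust `R`-algebra: `D ⊗_R T` is robust over `D` for every complete
local domain `D` of `R`. -/
def IsRobustAlgebra (R : Type u) [CommRing R] (T : Type u) [CommRing T] [Algebra R T] : Prop :=
  ∀ (D : Type u) [CommRing D] [Algebra R D], IsCompleteLocalDomainOf R D →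
    IsRobustOver D (D ⊗[R] T)

/-- `S` is a forcing algebra for `(M, N, u)`. -/
def IsForcingAlgebra (D : Type u) [CommRing D] (M : Type u) [AddCommGroup M] [Module D M]
    (N : Submodule D M) (u : M) (S : Type u) [CommRing S] [Algebra D S] : Prop :=
  (1 : S) ⊗ₜ[D] u ∈ N.baseChange S

/-- The immediate robust closure `N^▫` of `N` in `M` (over a complete local domain `D`):
the submodule generated by `N` and all `u` admitting a robust forcing algebra. -/
noncomputable def immediateRobustClosure (D : Type u) [CommRing D] (M : Type u)
    [AddCommGroup M] [Module D M] (N : Submodule D M) : Submodule D M :=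
  N ⊔ Submodule.span D {u : M |
    ∃ (S : Type u) (_ : CommRing S) (_ : Algebra D S),
      IsForcingAlgebra D M N u S ∧ IsRobustOver D S}

/-- The robust closure of `N` in `M` over a complete local domain `D`:
the (stabilizing) union of the iterated immediate robust closures `N^(j)`. -/
noncomputable def robustClosureCLD (D : Type u) [CommRing D] (M : Type u)
    [AddCommGroup M] [Module D M] (N : Submodule D M) : Submodule D M :=
  ⨆ j : ℕ, (immediateRobustClosure D M)^[j] N

/-- `u` lies in the robust closure of `N` in `M` over the Noetherian ring `R`:
for every complete local domain `D` of `R`, the image of `u` in `D ⊗_R M` lies in the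
robust closure, computed over `D`, of the image of `D ⊗_R N`. -/
def MemRobustClosure (R : Type u) [CommRing R] (M : Type u) [AddCommGroup M] [Module R M]
    (N : Submodule R M) (u : M) : Prop :=
  ∀ (D : Type u) [CommRing D] [Algebra R D], IsCompleteLocalDomainOf R D →
    (1 : D) ⊗ₜ[R] u ∈ robustClosureCLD D (D ⊗[R] M) (N.baseChange D)

section RobustProof

section PartA
open scoped TensorProduct

lemma finFunc_lt {d t : ℕ} (e e' : Fin d → Fin t) (j : Fin d) (hj : (e' j : ℕ) = e j + 1)
    (h : ∀ i, i ≠ j → e' i = e i) :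
    (finFunctionFinEquiv e : ℕ) < finFunctionFinEquiv e' := by
  simp only [finFunctionFinEquiv_apply]
  apply Finset.sum_lt_sum
  · intro i _
    by_cases hi : i = j
    · subst hi; rw [hj]; gcongr; omega
    · rw [h i hi]
  · refine ⟨j, Finset.mem_univ _, ?_⟩
    rw [hj]
    have : 0 < t := (e j).pos
    have : 0 < t ^ (j : ℕ) := by positivity
    gcongr; omega

lemma qlFiltration_of_prod_mem {d : ℕ} {S : Type u} [CommRing S] (x : Fin d → S) (t : ℕ)
    (ht : 0 < t)
    (hp : ∏ i, x i ^ (t - 1) ∈ Ideal.span (Set.range fun i => x i ^ t)) :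
    HasQLFiltration S (Ideal.span (Set.range x))
      (S ⧸ Ideal.span (Set.range fun i => x i ^ t)) (t ^ d - 1) := by
  set J := Ideal.span (Set.range fun i => x i ^ t) with hJ
  have htd : 0 < t ^ d := by positivity
  let mon : (Fin d → Fin t) → S ⧸ J := fun e => Ideal.Quotient.mk J (∏ i, x i ^ (e i : ℕ))
  let c : Fin (t ^ d - 1 + 1) → Submodule S (S ⧸ J) := fun k =>
    Submodule.span S {y | ∃ e : Fin d → Fin t,
      t ^ d - 1 - (k : ℕ) ≤ (finFunctionFinEquiv e : ℕ) ∧ y = mon e}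
  have cmono : Monotone c := by
    intro a b hab
    apply Submodule.span_mono
    rintro y ⟨e, he, rfl⟩
    refine ⟨e, ?_, rfl⟩
    have : (a : ℕ) ≤ b := hab
    omega
  refine ⟨c, cmono, ?_, ?_, ?_⟩
  · rw [eq_bot_iff, Submodule.span_le]
    rintro y ⟨e, he, rfl⟩
    have htop : e = fun _ => ⟨t - 1, Nat.sub_lt ht one_pos⟩ := by
      apply finFunctionFinEquiv.injective
      by_contra hne
      have h1 : (finFunctionFinEquiv e : ℕ) ≤ finFunctionFinEquiv (fun _ : Fin d => (⟨t - 1, by omega⟩ : Fin t)) := by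
        simp only [finFunctionFinEquiv_apply]
        apply Finset.sum_le_sum
        intro i _
        gcongr
        have := (e i).2
        simp; omega
      have h2 := (finFunctionFinEquiv (fun _ : Fin d => (⟨t - 1, by omega⟩ : Fin t))).2
      apply hne
      apply Fin.ext
      simp only [Fin.val_zero] at he
      omega
    rw [htop]
    simp only [SetLike.mem_coe, Submodule.mem_bot, mon]
    exact Ideal.Quotient.eq_zero_iff_mem.mpr hp
  · rw [eq_top_iff]
    rintro y -
    obtain ⟨s, rfl⟩ := Ideal.Quotient.mk_surjective y
    have : Ideal.Quotient.mk J s = s • mon (fun _ => ⟨0, ht⟩) := by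
      simp only [mon, pow_zero, Finset.prod_const_one, map_one]
      rw [Algebra.smul_def, mul_one]; rfl
    rw [this]
    apply Submodule.smul_mem
    apply Submodule.subset_span
    exact ⟨_, by simp, rfl⟩
  · intro k
    have hk : t ^ d - 1 - ((k : ℕ) + 1) < t ^ d := by omega
    set e₀ : Fin d → Fin t := finFunctionFinEquiv.symm ⟨t ^ d - 1 - ((k : ℕ) + 1), hk⟩ with he₀
    have he₀' : (finFunctionFinEquiv e₀ : ℕ) = t ^ d - 1 - ((k : ℕ) + 1) := by simp [he₀]
    constructor
    · refine ⟨mon e₀, ?_⟩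
      apply le_antisymm
      · rw [Submodule.span_le]
        rintro y ⟨e, he, rfl⟩
        simp only [Fin.val_succ] at he
        by_cases h : e = e₀
        · subst h
          exact Submodule.mem_sup_right (Submodule.mem_span_singleton_self _)
        · apply Submodule.mem_sup_left
          apply Submodule.subset_span
          refine ⟨e, ?_, rfl⟩
          have : (finFunctionFinEquiv e : ℕ) ≠ finFunctionFinEquiv e₀ := fun h' =>
            h (finFunctionFinEquiv.injective (Fin.ext h'))
          simp only [Fin.val_castSucc]
          omega
      · apply sup_le
        · exact cmono (Fin.castSucc_le_succ k)
        · rw [Submodule.span_singleton_le_iff_mem]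
          apply Submodule.subset_span
          refine ⟨e₀, ?_, rfl⟩
          simp only [Fin.val_succ]; omega
    · intro a ha y hy
      induction ha using Submodule.span_induction with
      | zero => simp
      | add a b _ _ h1 h2 => rw [add_smul]; exact add_mem h1 h2
      | smul r a _ h => rw [smul_assoc]; exact Submodule.smul_mem _ _ h
      | mem a ha =>
        obtain ⟨j, rfl⟩ := ha
        induction hy using Submodule.span_induction with
        | zero => simp
        | add a b _ _ h1 h2 => rw [smul_add]; exact add_mem h1 h2
        | smul r a _ h => rw [smul_comm]; exact Submodule.smul_mem _ _ h
        | mem y hy =>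
          obtain ⟨e, he, rfl⟩ := hy
          have hmul : x j • mon e = Ideal.Quotient.mk J (x j * ∏ i, x i ^ (e i : ℕ)) := by
            simp only [mon]; rw [Algebra.smul_def, map_mul]; rfl
          rw [hmul]
          by_cases hej : (e j : ℕ) + 1 < t
          · have h3 : x j * ∏ i, x i ^ (e i : ℕ) =
                ∏ i, x i ^ ((Function.update e j ⟨e j + 1, hej⟩ : Fin d → Fin t) i : ℕ) := by
              rw [← Finset.mul_prod_erase _ _ (Finset.mem_univ j),
                ← Finset.mul_prod_erase Finset.univ (fun i => x i ^ ((Function.update e j ⟨e j + 1, hej⟩ : Fin d → Fin t) i : ℕ)) (Finset.mem_univ j)]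
              rw [← mul_assoc]
              congr 1
              · simp [pow_succ']
              · apply Finset.prod_congr rfl
                intro i hi
                rw [Function.update_of_ne (Finset.ne_of_mem_erase hi)]
            rw [h3]
            apply Submodule.subset_span
            refine ⟨_, ?_, rfl⟩
            have := finFunc_lt e (Function.update e j ⟨e j + 1, hej⟩) j (by simp)
              (fun i hi => Function.update_of_ne hi _ _)
            simp only [Fin.val_succ] at he
            simp only [Fin.val_castSucc]
            omega
          · have h4 : (e j : ℕ) + 1 = t := by have := (e j).2; omega
            have : x j * ∏ i, x i ^ (e i : ℕ) ∈ J := by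
              rw [← Finset.mul_prod_erase _ _ (Finset.mem_univ j), ← mul_assoc, ← pow_succ', h4]
              exact Ideal.mul_mem_right _ _ (Ideal.subset_span ⟨j, rfl⟩)
            rw [Ideal.Quotient.eq_zero_iff_mem.mpr this]
            exact zero_mem _

lemma not_qseq_of_prod_mem {d : ℕ} {S : Type u} [CommRing S] (x : Fin d → S) (t : ℕ)
    (ht : 0 < t)
    (hp : ∏ i, x i ^ (t - 1) ∈ Ideal.span (Set.range fun i => x i ^ t)) :
    ¬ IsQSequence x := by
  rintro ⟨-, h⟩
  have h1 := h t ht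
  have h2 : quasilength S (Ideal.span (Set.range x))
      (S ⧸ Ideal.span (Set.range fun i => x i ^ t)) ≤ ((t ^ d - 1 : ℕ) : ℕ∞) :=
    sInf_le ⟨_, rfl, qlFiltration_of_prod_mem x t ht hp⟩
  have h3 := h1.trans h2
  have htd : 0 < t ^ d := by positivity
  have h4 : ((t ^ d : ℕ) : ℕ∞) ≤ ((t ^ d - 1 : ℕ) : ℕ∞) := by simpa using h3
  rw [Nat.cast_le] at h4
  omega

end PartA

section PartB
open scoped TensorProduct
open IsLocalRing

lemma cancel_dim (n k : ℕ) (a : WithBot ℕ∞) (h : ((n + k : ℕ) : WithBot ℕ∞) ≤ a + k) : (n : WithBot ℕ∞) ≤ a := by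
  induction a using WithBot.recBotCoe with
  | bot => simp at h
  | coe a =>
    induction a using ENat.recTopCoe with
    | top => exact_mod_cast le_top
    | coe a => 
      have : n + k ≤ a + k := by exact_mod_cast h
      have : n ≤ a := by omega
      exact_mod_cast this

lemma dim_le_card {R : Type u} [CommRing R] [IsNoetherianRing R] [IsLocalRing R]
    (s : Finset R) (hs : Ideal.span (s : Set R) = maximalIdeal R) :
    ringKrullDim R ≤ (s.card : WithBot ℕ∞) := by
  refine (ringKrullDim_le_spanFinrank_maximalIdeal R).trans ?_
  rw [← hs]
  have := Submodule.spanFinrank_span_le_encard (R := R) (s : Set R)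
  rw [Set.encard_coe_eq_coe_finsetCard] at this
  have h2 : (Ideal.span (s : Set R)).spanFinrank ≤ s.card := by exact_mod_cast this
  exact_mod_cast h2

lemma maximalIdeal_quot {R : Type u} [CommRing R] [IsLocalRing R] (I : Ideal R)
    [IsLocalRing (R ⧸ I)] :
    maximalIdeal (R ⧸ I) = (maximalIdeal R).map (Ideal.Quotient.mk I) := by
  have hI : I ≤ maximalIdeal R := le_maximalIdeal (by
    intro h
    have : Subsingleton (R ⧸ I) := Ideal.Quotient.subsingleton_iff.mpr h
    exact not_subsingleton (R ⧸ I) this)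
  symm
  apply IsLocalRing.eq_maximalIdeal
  exact Ideal.IsMaximal.map_of_surjective_of_ker_le Ideal.Quotient.mk_surjective (by simpa using hI)

lemma isLocalRing_quot {R : Type u} [CommRing R] [IsLocalRing R] (I : Ideal R) (h : I ≤ maximalIdeal R) :
    IsLocalRing (R ⧸ I) := by
  have : Nontrivial (R ⧸ I) := Ideal.Quotient.nontrivial_iff.mpr (fun h' => by
    rw [h'] at h
    exact (maximalIdeal.isMaximal R).ne_top (top_le_iff.mp h))
  exact IsLocalRing.of_surjective' _ Ideal.Quotient.mk_surjective

theorem isDomain_of_regular (n : ℕ) : ∀ (R : Type u) [CommRing R] [IsNoetherianRing R] [IsLocalRing R]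
    (s : Finset R), s.card ≤ n → Ideal.span (s : Set R) = maximalIdeal R →
    (n : WithBot ℕ∞) ≤ ringKrullDim R → IsDomain R := by
  classical
  induction n with
  | zero =>
    intro R _ _ _ s hs hsp _
    have : s = ∅ := by simpa using hs
    subst this
    have h : maximalIdeal R = ⊥ := by rw [← hsp]; simp
    have := (IsLocalRing.isField_iff_maximalIdeal_eq.mpr h)
    exact this.isDomain
  | succ n ih =>
    intro R _ _ _ s hs hsp hdim
    have hnle : ∀ q ∈ minimalPrimes R, ¬ maximalIdeal R ≤ q := by
      intro q hq hle
      have hqp : q.IsPrime := hq.1.1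
      have hq' : q = maximalIdeal R := le_antisymm (le_maximalIdeal hqp.ne_top) hle
      have h0 : (maximalIdeal R).height = 0 := by
        rw [← hq']
        exact Ideal.height_eq_zero_iff.mpr hq
      rw [← IsLocalRing.maximalIdeal_height_eq_ringKrullDim, h0] at hdim
      have : ((n + 1 : ℕ) : ℕ∞) ≤ 0 := by exact_mod_cast hdim
      simp at this
    have hsq : ¬ maximalIdeal R ≤ maximalIdeal R ^ 2 := by
      intro h
      have h0 : maximalIdeal R = ⊥ := by
        apply Submodule.eq_bot_of_le_smul_of_le_jacobson_bot (maximalIdeal R) _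
          (IsNoetherian.noetherian _) _ (maximalIdeal_le_jacobson _)
        rw [pow_two] at h; exact h
      obtain ⟨q, hq, -⟩ := Ideal.exists_minimalPrimes_le (I := (⊥ : Ideal R)) (J := maximalIdeal R) bot_le
      exact hnle q hq (h0 ▸ bot_le)
    obtain ⟨x, hxm, hx2, hxq⟩ : ∃ x ∈ maximalIdeal R, x ∉ maximalIdeal R ^ 2 ∧
        ∀ q ∈ minimalPrimes R, x ∉ q := by
      by_contra! hcon
      have hfin := minimalPrimes.finite_of_isNoetherianRing R
      have := (Ideal.subset_union_prime (s := insert (maximalIdeal R ^ 2) hfin.toFinset) (f := id)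
        (maximalIdeal R ^ 2) (maximalIdeal R ^ 2) (I := maximalIdeal R) (by
          intro i hi hne _
          have : i ∈ minimalPrimes R := by
            simpa [hne] using hi
          exact this.1.1)).mp (by
          intro x hx
          simp only [Set.mem_iUnion]
          by_cases h2 : x ∈ maximalIdeal R ^ 2
          · exact ⟨_, Finset.mem_insert_self _ _, h2⟩
          · obtain ⟨q, hq, hxq⟩ := hcon x hx h2
            exact ⟨q, by simp [hq], hxq⟩)
      obtain ⟨i, hi, hle⟩ := this
      simp only [Finset.mem_insert, Set.Finite.mem_toFinset] at hi
      rcases hi with rfl | hi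
      · exact hsq hle
      · exact hnle i hi hle
    -- `x` can replace one of the generators
    obtain ⟨y, hys, hrep⟩ : ∃ y ∈ s, maximalIdeal R ≤ Ideal.span {x} ⊔ Ideal.span ((s.erase y : Finset R) : Set R) := by
      rw [← hsp] at hxm
      obtain ⟨f, -, hf⟩ := Submodule.mem_span_finset.mp hxm
      obtain ⟨y, hy, hu⟩ : ∃ y ∈ s, IsUnit (f y) := by
        by_contra! hcon
        apply hx2
        rw [← hf]
        apply Ideal.sum_mem
        intro a ha
        rw [pow_two]
        exact Ideal.mul_mem_mul ((mem_maximalIdeal _).mpr (hcon a ha)) (hsp ▸ Ideal.subset_span ha)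
      refine ⟨y, hy, ?_⟩
      rw [← hsp, Ideal.span_le]
      intro z hz
      by_cases hzy : z = y
      · subst hzy
        rw [← Finset.add_sum_erase _ _ hy] at hf
        have h1 : f z * z = x - ∑ a ∈ s.erase z, f a • a := by rw [← hf]; simp
        have h2 : f z * z ∈ Ideal.span {x} ⊔ Ideal.span ((s.erase z : Finset R) : Set R) := by
          rw [h1]
          apply sub_mem
          · exact Ideal.mem_sup_left (Ideal.mem_span_singleton_self x)
          · apply Ideal.mem_sup_right
            apply Ideal.sum_mem
            intro a ha
            exact Ideal.mul_mem_left _ _ (Ideal.subset_span ha)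
        exact (Ideal.unit_mul_mem_iff_mem _ hu).mp h2
      · exact Ideal.mem_sup_right (Ideal.subset_span (by simpa [hzy] using hz))
    have hloc := isLocalRing_quot (Ideal.span {x}) (by simpa [Ideal.span_le] using hxm)
    have hxdim : (n : WithBot ℕ∞) ≤ ringKrullDim (R ⧸ Ideal.span {x}) := by
      have := ringKrullDim_le_ringKrullDim_quotient_add_card ({x} : Finset R) (by
        simpa using (IsLocalRing.ringJacobson_eq_maximalIdeal (R := R)).ge hxm)
      have h2 := hdim.trans this
      rw [Finset.coe_singleton, Finset.card_singleton] at h2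
      exact cancel_dim n 1 _ h2
    have hd : IsDomain (R ⧸ Ideal.span {x}) := by
      apply ih (R ⧸ Ideal.span {x}) ((s.erase y).image (Ideal.Quotient.mk (Ideal.span {x}))) _ _ hxdim
      · refine Finset.card_image_le.trans ?_
        rw [Finset.card_erase_of_mem hys]; omega
      · rw [maximalIdeal_quot, Finset.coe_image, ← Ideal.map_span]
        apply le_antisymm
        · apply Ideal.map_mono
          rw [← hsp]
          exact Ideal.span_mono (by simp)
        · refine (Ideal.map_mono hrep).trans ?_
          rw [Ideal.map_sup]
          simp [Ideal.map_span]
    have hpr : (Ideal.span {x}).IsPrime := (Ideal.Quotient.isDomain_iff_prime _).mp hd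
    obtain ⟨q, hq, hqx⟩ := Ideal.exists_minimalPrimes_le (I := (⊥ : Ideal R)) (J := Ideal.span {x}) bot_le
    have hqp : q.IsPrime := hq.1.1
    have hq0 : q = ⊥ := by
      apply Submodule.eq_bot_of_le_smul_of_le_jacobson_bot (maximalIdeal R) _
          (IsNoetherian.noetherian _) _ (maximalIdeal_le_jacobson _)
      intro z hz
      obtain ⟨w, rfl⟩ := Ideal.mem_span_singleton'.mp (hqx hz)
      have hw : w ∈ q := (hqp.mem_or_mem hz).resolve_right (hxq q hq)
      rw [mul_comm]
      exact Submodule.smul_mem_smul hxm hw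
    rw [hq0] at hqp
    exact IsDomain.of_bot_isPrime R

end PartB

section PartC
open scoped TensorProduct
open IsLocalRing

/-- The ideal generated by the `x j ^ e j`, `j ∈ T`. -/
def powIdeal {R : Type u} [CommRing R] {ι : Type} (x : ι → R) (e : ι → ℕ) (T : Finset ι) : Ideal R :=
  Ideal.span ((fun j => x j ^ e j) '' (T : Set ι))

lemma powIdeal_insert {R : Type u} [CommRing R] {ι : Type} [DecidableEq ι] (x : ι → R) (e : ι → ℕ)
    (T : Finset ι) (k : ι) : powIdeal x e (insert k T) = powIdeal x e T ⊔ Ideal.span {x k ^ e k} := by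
  simp [powIdeal, Set.image_insert_eq, Ideal.span_insert, sup_comm]

lemma powIdeal_congr {R : Type u} [CommRing R] {ι : Type} (x : ι → R) (e e' : ι → ℕ)
    (T : Finset ι) (h : ∀ i ∈ T, e i = e' i) : powIdeal x e T = powIdeal x e' T := by
  unfold powIdeal
  congr 1
  apply Set.image_congr
  intro i hi
  rw [h i hi]

/-- one step -/
lemma nzd_step {R : Type u} [CommRing R] (J : Ideal R) (y z : R) 
    (hz : ∀ a, z * a ∈ J → a ∈ J) 
    (h1 : ∀ a, y * a ∈ J ⊔ Ideal.span {z} → a ∈ J ⊔ Ideal.span {z}) (n : ℕ) (hn : 1 ≤ n) :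
    ∀ a, y * a ∈ J ⊔ Ideal.span {z ^ n} → a ∈ J ⊔ Ideal.span {z ^ n} := by
  induction n, hn using Nat.le_induction with
  | base => simpa using h1
  | succ n hn ih =>
    intro a ha
    have hle : J ⊔ Ideal.span {z ^ (n + 1)} ≤ J ⊔ Ideal.span {z} := by
      apply sup_le_sup_left
      rw [Ideal.span_singleton_le_span_singleton, pow_succ]
      exact dvd_mul_left _ _
    obtain ⟨j, hj, w, hw, rfl⟩ := Submodule.mem_sup.mp (h1 a (hle ha))
    obtain ⟨b, rfl⟩ := Ideal.mem_span_singleton'.mp hw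
    obtain ⟨j', hj', w', hw', heq⟩ := Submodule.mem_sup.mp ha
    obtain ⟨c, rfl⟩ := Ideal.mem_span_singleton'.mp hw'
    have h2 : z * (y * b - c * z ^ n) ∈ J := by
      have : z * (y * b - c * z ^ n) = j' - y * j := by
        linear_combination (-1 : R) * heq
      rw [this]
      exact sub_mem hj' (Ideal.mul_mem_left _ _ hj)
    have h3 : y * b ∈ J ⊔ Ideal.span {z ^ n} := by
      have : y * b = (y * b - c * z ^ n) + c * z ^ n := by ring
      rw [this]
      exact add_mem (Ideal.mem_sup_left (hz _ h2))
        (Ideal.mem_sup_right (Ideal.mul_mem_left _ _ (Ideal.mem_span_singleton_self _)))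
    obtain ⟨j2, hj2, w2, hw2, rfl⟩ := Submodule.mem_sup.mp (ih b h3)
    obtain ⟨c2, rfl⟩ := Ideal.mem_span_singleton'.mp hw2
    apply add_mem (Ideal.mem_sup_left hj)
    rw [add_mul]
    apply add_mem (Ideal.mem_sup_left (Ideal.mul_mem_right _ _ hj2))
    apply Ideal.mem_sup_right
    rw [mul_assoc, ← pow_succ]
    exact Ideal.mul_mem_left _ _ (Ideal.mem_span_singleton_self _)

lemma nzd_pow {R : Type u} [CommRing R] {ι : Type} [DecidableEq ι] (x : ι → R)
    (hbase : ∀ (T : Finset ι) (i : ι), i ∉ T → ∀ a, x i * a ∈ powIdeal x 1 T → a ∈ powIdeal x 1 T)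
    (T : Finset ι) (U : Finset ι) (hU : Disjoint U T) (e : ι → ℕ) (he : ∀ i ∈ T, 1 ≤ e i) 
    (i : ι) (hi : i ∉ U) (hi' : i ∉ T) :
    ∀ a, x i * a ∈ powIdeal x 1 U ⊔ powIdeal x e T → a ∈ powIdeal x 1 U ⊔ powIdeal x e T := by
  induction T using Finset.induction_on generalizing U i with
  | empty => simpa [powIdeal] using hbase U i hi
  | insert k T hk ih =>
    rw [powIdeal_insert, ← sup_assoc]
    have hkU : k ∉ U := fun h => (Finset.disjoint_left.mp hU) h (Finset.mem_insert_self _ _)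
    have hUT : Disjoint U T := hU.mono_right (Finset.subset_insert _ _)
    apply nzd_step _ _ _ _ _ _ (he k (Finset.mem_insert_self _ _))
    · exact ih U hUT (fun i hi => he i (Finset.mem_insert_of_mem hi)) k hkU hk
    · have := ih (insert k U) (by simp [hUT, hk]) (fun i hi => he i (Finset.mem_insert_of_mem hi)) i
        (by
          simp only [Finset.mem_insert, not_or]
          exact ⟨fun h => hi' (h ▸ Finset.mem_insert_self _ _), hi⟩) 
        (fun h => hi' (Finset.mem_insert_of_mem h))
      rw [powIdeal_insert, sup_right_comm] at this
      simpa using this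

/-- colon lemma -/
lemma colon_pow {R : Type u} [CommRing R] {ι : Type} [DecidableEq ι] [Fintype ι] (x : ι → R)
    (hbase : ∀ (T : Finset ι) (i : ι), i ∉ T → ∀ a, x i * a ∈ powIdeal x 1 T → a ∈ powIdeal x 1 T)
    (e : ι → ℕ) (he : ∀ i, 1 ≤ e i) (i : ι) (n : ℕ) (hn : e i = n + 1) (b : R) :
    (x i * b ∈ powIdeal x e Finset.univ → ∃ c, b - x i ^ n * c ∈ powIdeal x e Finset.univ) ∧
    (x i ^ n * b ∈ powIdeal x e Finset.univ → b ∈ powIdeal x (Function.update e i 1) Finset.univ) := by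
  have hsp : ∀ f : ι → ℕ, powIdeal x f Finset.univ =
      powIdeal x f (Finset.univ.erase i) ⊔ Ideal.span {x i ^ f i} := by
    intro f
    rw [← powIdeal_insert, Finset.insert_erase (Finset.mem_univ i)]
  have hnz : ∀ a, x i * a ∈ powIdeal x e (Finset.univ.erase i) →
      a ∈ powIdeal x e (Finset.univ.erase i) := by
    have := nzd_pow x hbase (Finset.univ.erase i) ∅ (by simp) e (fun i _ => he i) i (by simp) (by simp)
    have h0 : powIdeal x 1 (∅ : Finset ι) = ⊥ := by simp [powIdeal]
    simpa [h0] using this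
  have hnzp : ∀ (k : ℕ) a, x i ^ k * a ∈ powIdeal x e (Finset.univ.erase i) →
      a ∈ powIdeal x e (Finset.univ.erase i) := by
    intro k
    induction k with
    | zero => simp
    | succ k ih => 
      intro a ha
      rw [pow_succ', mul_assoc] at ha
      exact ih _ (hnz _ ha)
  constructor
  · intro h
    rw [hsp] at h ⊢
    obtain ⟨j, hj, w, hw, heq⟩ := Submodule.mem_sup.mp h
    obtain ⟨c, rfl⟩ := Ideal.mem_span_singleton'.mp hw
    refine ⟨c, Ideal.mem_sup_left (hnz _ ?_)⟩
    have : x i * (b - x i ^ n * c) = j := by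
      rw [hn] at heq
      linear_combination (-1 : R) * heq
    rwa [this]
  · intro h
    rw [hsp] at h ⊢
    rw [powIdeal_congr x (Function.update e i 1) e _ (by
      intro k hk
      exact Function.update_of_ne (Finset.ne_of_mem_erase hk) _ _)]
    obtain ⟨j, hj, w, hw, heq⟩ := Submodule.mem_sup.mp h
    obtain ⟨c, rfl⟩ := Ideal.mem_span_singleton'.mp hw
    have h1 : b - x i * c ∈ powIdeal x e (Finset.univ.erase i) := by
      apply hnzp n
      have : x i ^ n * (b - x i * c) = j := by
        rw [hn] at heq
        linear_combination (-1 : R) * heq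
      rwa [this]
    have : b = (b - x i * c) + c * x i := by ring
    rw [this]
    apply add_mem (Ideal.mem_sup_left h1)
    apply Ideal.mem_sup_right
    apply Ideal.mul_mem_left
    simpa using Ideal.mem_span_singleton_self (x i)

lemma socle_aux {R : Type u} [CommRing R] {ι : Type} [DecidableEq ι] [Fintype ι] (x : ι → R)
    (hbase : ∀ (T : Finset ι) (i : ι), i ∉ T → ∀ a, x i * a ∈ powIdeal x 1 T → a ∈ powIdeal x 1 T)
    (t : ℕ) (ht : 0 < t) (a : R) (ha : ∀ i, x i * a ∈ powIdeal x (fun _ => t) Finset.univ)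
    (T : Finset ι) :
    (∃ b, a - (∏ i ∈ T, x i ^ (t - 1)) * b ∈ powIdeal x (fun _ => t) Finset.univ) ∧
    (∀ b, (∏ i ∈ T, x i ^ (t - 1)) * b ∈ powIdeal x (fun _ => t) Finset.univ → 
      b ∈ powIdeal x (fun i => if i ∈ T then 1 else t) Finset.univ) := by
  induction T using Finset.induction_on with
  | empty => exact ⟨⟨a, by simp⟩, fun b hb => by simpa using hb⟩
  | insert k T hk ih =>
    obtain ⟨⟨b, hb⟩, ih2⟩ := ih
    have he : ∀ i, 1 ≤ (fun i => if i ∈ T then 1 else t) i := by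
      intro i; dsimp only; split_ifs <;> omega
    have hek : (fun i => if i ∈ T then 1 else t) k = (t - 1) + 1 := by
      simp only [hk, if_false]; omega
    constructor
    · have h1 : (∏ i ∈ T, x i ^ (t - 1)) * (x k * b) ∈ powIdeal x (fun _ => t) Finset.univ := by
        have : (∏ i ∈ T, x i ^ (t - 1)) * (x k * b) =
          x k * a - x k * (a - (∏ i ∈ T, x i ^ (t - 1)) * b) := by ring
        rw [this]
        exact sub_mem (ha k) (Ideal.mul_mem_left _ _ hb)
      obtain ⟨c, hc⟩ := (colon_pow x hbase _ he k (t - 1) hek b).1 (ih2 _ h1)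
      refine ⟨c, ?_⟩
      rw [Finset.prod_insert hk]
      have h2 : a - x k ^ (t - 1) * (∏ i ∈ T, x i ^ (t - 1)) * c =
        (a - (∏ i ∈ T, x i ^ (t - 1)) * b) + (∏ i ∈ T, x i ^ (t - 1)) * (b - x k ^ (t - 1) * c) := by
        ring
      rw [h2]
      apply add_mem hb
      have hle : ∀ z ∈ powIdeal x (fun i => if i ∈ T then 1 else t) Finset.univ,
          (∏ i ∈ T, x i ^ (t - 1)) * z ∈ powIdeal x (fun _ => t) Finset.univ := by
        intro z hz
        unfold powIdeal at hz
        induction hz using Submodule.span_induction with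
        | zero => simp
        | add u v _ _ h1 h2 => rw [mul_add]; exact add_mem h1 h2
        | smul r u _ h => rw [mul_smul_comm]; exact Submodule.smul_mem _ _ h
        | mem u hu =>
          obtain ⟨j, -, rfl⟩ := hu
          dsimp only
          split_ifs with hj
          · rw [← Finset.mul_prod_erase _ _ hj]
            have : x j ^ (t - 1) * (∏ i ∈ T.erase j, x i ^ (t - 1)) * x j ^ 1 =
              (∏ i ∈ T.erase j, x i ^ (t - 1)) * x j ^ (t - 1 + 1) := by ring
            rw [this, Nat.sub_add_cancel ht]
            exact Ideal.mul_mem_left _ _ (Ideal.subset_span ⟨j, by simp, rfl⟩)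
          · exact Ideal.mul_mem_left _ _ (Ideal.subset_span ⟨j, by simp, rfl⟩)
      exact hle _ hc
    · intro b hb
      rw [Finset.prod_insert hk, mul_comm (x k ^ (t - 1)), mul_assoc] at hb
      have := (colon_pow x hbase _ he k (t - 1) hek b).2 (ih2 _ hb)
      rw [powIdeal_congr x _ (fun i => if i ∈ insert k T then 1 else t)] at this
      · exact this
      · intro i _
        by_cases hik : i = k
        · subst hik; simp
        · rw [Function.update_of_ne hik]; simp [hik]

lemma regular_base {R : Type u} [CommRing R] [IsNoetherianRing R] [IsLocalRing R] {n : ℕ}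
    (x : Fin n → R) (hx : Ideal.span (Set.range x) = maximalIdeal R)
    (hdim : (n : WithBot ℕ∞) ≤ ringKrullDim R)
    (T : Finset (Fin n)) (i : Fin n) (hi : i ∉ T) (a : R) (ha : x i * a ∈ powIdeal x 1 T) : 
    a ∈ powIdeal x 1 T := by
  classical
  have hJ : powIdeal x 1 T = Ideal.span ((T.image x : Finset R) : Set R) := by
    simp [powIdeal]
  rw [hJ] at ha ⊢
  set J := Ideal.span ((T.image x : Finset R) : Set R) with hJdef
  have hm : ∀ j, x j ∈ maximalIdeal R := fun j => hx ▸ Ideal.subset_span ⟨j, rfl⟩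
  have hJm : J ≤ maximalIdeal R := by
    rw [hJdef, Ideal.span_le]
    intro z hz
    simp only [Finset.coe_image, Set.mem_image] at hz
    obtain ⟨j, -, rfl⟩ := hz
    exact hm j
  have hloc := isLocalRing_quot J hJm
  have hcard : T.card ≤ n := by simpa using Finset.card_le_univ T
  have hdimJ : ((n - T.card : ℕ) : WithBot ℕ∞) ≤ ringKrullDim (R ⧸ J) := by
    apply cancel_dim _ T.card
    rw [Nat.sub_add_cancel hcard]
    have := ringKrullDim_le_ringKrullDim_quotient_add_card (T.image x) (by
      rw [IsLocalRing.ringJacobson_eq_maximalIdeal]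
      intro z hz
      simp only [Finset.coe_image, Set.mem_image] at hz
      obtain ⟨j, -, rfl⟩ := hz
      exact hm j)
    refine (hdim.trans this).trans ?_
    gcongr
    exact_mod_cast Finset.card_image_le
  have hgen : ∀ U : Finset (Fin n), (∀ j, j ∉ U → x j ∈ J) → 
      Ideal.span (((U.image x).image (Ideal.Quotient.mk J) : Finset (R ⧸ J)) : Set (R ⧸ J)) =
        maximalIdeal (R ⧸ J) := by
    intro U hU
    rw [maximalIdeal_quot, ← hx, Ideal.map_span]
    apply le_antisymm
    · apply Ideal.span_mono
      intro z hz
      simp only [Finset.coe_image, Set.mem_image] at hz ⊢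
      obtain ⟨_, ⟨j, -, rfl⟩, rfl⟩ := hz
      exact ⟨_, ⟨j, rfl⟩, rfl⟩
    · rw [Ideal.span_le]
      rintro _ ⟨_, ⟨j, rfl⟩, rfl⟩
      by_cases hj : j ∈ U
      · apply Ideal.subset_span
        simp only [Finset.coe_image, Set.mem_image]
        exact ⟨_, ⟨j, hj, rfl⟩, rfl⟩
      · rw [Ideal.Quotient.eq_zero_iff_mem.mpr (hU j hj)]
        exact zero_mem _
  have hTJ : ∀ j ∈ T, x j ∈ J := fun j hj => Ideal.subset_span (by simpa using ⟨j, hj, rfl⟩)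
  have hd : IsDomain (R ⧸ J) := by
    apply isDomain_of_regular (n - T.card) _ ((Tᶜ.image x).image (Ideal.Quotient.mk J)) _ _ hdimJ
    · refine Finset.card_image_le.trans (Finset.card_image_le.trans ?_)
      simp [Finset.card_compl]
    · apply hgen
      intro j hj
      exact hTJ j (by simpa using hj)
  have hpr : J.IsPrime := (Ideal.Quotient.isDomain_iff_prime _).mp hd
  refine (hpr.mem_or_mem ha).resolve_left ?_
  intro hxi
  have h1 := dim_le_card _ (hgen (Tᶜ.erase i) (by
    intro j hj
    by_cases hji : j = i
    · subst hji; exact hxi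
    · exact hTJ j (by simpa [hji] using hj)))
  have h2 : ((Tᶜ.erase i).image x |>.image (Ideal.Quotient.mk J)).card ≤ n - T.card - 1 := by
    refine Finset.card_image_le.trans (Finset.card_image_le.trans ?_)
    rw [Finset.card_erase_of_mem (by simpa using hi)]
    simp [Finset.card_compl]
  have h3 := hdimJ.trans h1
  have h4 : n - T.card ≤ ((Tᶜ.erase i).image x |>.image (Ideal.Quotient.mk J)).card := by
    exact_mod_cast h3
  have h5 : (insert i T).card ≤ n := by simpa using Finset.card_le_univ (insert i T)
  rw [Finset.card_insert_of_notMem hi] at h5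
  omega

theorem socle_regular {R : Type u} [CommRing R] [IsNoetherianRing R] [IsLocalRing R] {n : ℕ}
    (x : Fin n → R) (hx : Ideal.span (Set.range x) = maximalIdeal R)
    (hdim : (n : WithBot ℕ∞) ≤ ringKrullDim R) (t : ℕ) (ht : 0 < t)
    (a : R) (ha : ∀ i, x i * a ∈ Ideal.span (Set.range fun i => x i ^ t)) :
    ∃ b, a - (∏ i, x i ^ (t - 1)) * b ∈ Ideal.span (Set.range fun i => x i ^ t) := by
  have hJ : Ideal.span (Set.range fun i => x i ^ t) = powIdeal x (fun _ => t) Finset.univ := by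
    simp [powIdeal]
  rw [hJ] at ha ⊢
  exact (socle_aux x (regular_base x hx hdim) t ht a ha Finset.univ).1

end PartC

section PartE
open scoped TensorProduct

lemma length_eq_add_range {R X Y Z : Type*} [CommRing R] [AddCommGroup X] [AddCommGroup Y]
    [AddCommGroup Z] [Module R X] [Module R Y] [Module R Z] (f : X →ₗ[R] Y) (g : Y →ₗ[R] Z)
    (hf : Function.Injective f) (H : Function.Exact f g) :
    Module.length R Y = Module.length R X + Module.length R (LinearMap.range g) := by
  refine Module.length_eq_add_of_exact f g.rangeRestrict hf g.surjective_rangeRestrict ?_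
  intro y
  rw [← H y]
  constructor
  · intro h
    simpa using congrArg Subtype.val h
  · intro h
    exact Subtype.ext h

section
variable {A : Type u} [CommRing A] [IsArtinianRing A] [IsLocalRing A]

lemma length_hom_le (s : A)
    (hs' : ∀ a : A, (∀ y ∈ IsLocalRing.maximalIdeal A, y * a = 0) → a ∈ Ideal.span {s})
    (hs : ∀ y ∈ IsLocalRing.maximalIdeal A, y * s = 0)
    (V : Type u) [AddCommGroup V] [Module A V] [hV : Module.Finite A V] :
    Module.length A (V →ₗ[A] A) ≤ Module.length A V := by
  induction hV using IsNoetherianRing.induction_on_isQuotientEquivQuotientPrime A with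
  | subsingleton N =>
    have : Subsingleton (N →ₗ[A] A) := ⟨fun f g => by ext x; simp [Subsingleton.elim x 0]⟩
    rw [Module.length_eq_zero]
    exact zero_le
  | quotient N p e =>
    obtain ⟨p, hp⟩ := p
    dsimp only at e
    have hpm : p = IsLocalRing.maximalIdeal A := by
      have : p.IsMaximal := inferInstance
      exact IsLocalRing.eq_maximalIdeal this
    subst hpm
    -- Hom(N,A) → span{s}
    let v : N := e.symm (Ideal.Quotient.mk _ 1)
    have hv : ∀ y ∈ IsLocalRing.maximalIdeal A, y • v = 0 := by
      intro y hy
      rw [← map_smul]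
      rw [show y • (Ideal.Quotient.mk (IsLocalRing.maximalIdeal A) 1) = Ideal.Quotient.mk _ y by
        rw [Algebra.smul_def]; simp]
      rw [Ideal.Quotient.eq_zero_iff_mem.2 hy, map_zero]
    let ev : (N →ₗ[A] A) →ₗ[A] (Ideal.span {s} : Ideal A) :=
      LinearMap.codRestrict _ (LinearMap.applyₗ v) (fun f => hs' _ (fun y hy => by
        have : y * f v = f (y • v) := by simp
        rw [LinearMap.applyₗ_apply_apply, this, hv y hy, map_zero]))
    have hinj : Function.Injective ev := by
      intro f g h
      have h1 : f v = g v := congrArg Subtype.val h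
      ext x
      obtain ⟨a, ha⟩ := Ideal.Quotient.mk_surjective (e x)
      have : x = a • v := by
        rw [← map_smul, Algebra.smul_def, ← Ideal.Quotient.algebraMap_eq, map_one, mul_one,
          Ideal.Quotient.algebraMap_eq, ha, e.symm_apply_apply]
      rw [this, map_smul, map_smul, h1]
    refine (Module.length_le_of_injective ev hinj).trans ?_
    rw [e.length_eq]
    let q : (A ⧸ IsLocalRing.maximalIdeal A) →ₗ[A] (Ideal.span {s} : Ideal A) :=
      Submodule.liftQ _ (LinearMap.toSpanSingleton A _ ⟨s, Ideal.mem_span_singleton_self s⟩) (by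
        intro y hy
        rw [LinearMap.mem_ker]
        exact Subtype.ext (hs y hy))
    refine Module.length_le_of_surjective q ?_
    rintro ⟨z, hz⟩
    obtain ⟨a, rfl⟩ := Ideal.mem_span_singleton'.1 hz
    exact ⟨Ideal.Quotient.mk _ a, Subtype.ext rfl⟩
  | exact N₁ N₂ N₃ f g hf hg h ih1 ih3 =>
    rw [Module.length_eq_add_of_exact f g hf hg h, length_eq_add_range (LinearMap.lcomp A A g) (LinearMap.lcomp A A f)
      (LinearMap.lcomp_injective_of_surjective g hg) (LinearMap.exact_lcomp_of_exact_of_surjective A h hg),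
      add_comm]
    refine add_le_add (le_trans ?_ ih1) ih3
    exact Module.length_le_of_injective (Submodule.subtype _) (Submodule.subtype_injective _)

lemma baer_self (s : A)
    (hs' : ∀ a : A, (∀ y ∈ IsLocalRing.maximalIdeal A, y * a = 0) → a ∈ Ideal.span {s})
    (hs : ∀ y ∈ IsLocalRing.maximalIdeal A, y * s = 0) : Module.Baer A A := by
  rw [Module.Baer.iff_surjective]
  intro I
  have hex : Function.Exact I.subtype (Submodule.mkQ I) := LinearMap.exact_subtype_mkQ I
  have h1 := length_eq_add_range (LinearMap.lcomp A A (Submodule.mkQ I)) (LinearMap.lcomp A A I.subtype)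
      (LinearMap.lcomp_injective_of_surjective (N := A) (Submodule.mkQ I) (Submodule.mkQ_surjective I))
      (LinearMap.exact_lcomp_of_exact_of_surjective A hex (Submodule.mkQ_surjective I))
  have h2 := Module.length_eq_add_of_exact I.subtype (Submodule.mkQ I) (Submodule.subtype_injective _)
    (Submodule.mkQ_surjective I) hex
  have h3 := length_hom_le s hs' hs (A ⧸ I)
  have h4 := length_hom_le s hs' hs I
  have h5 := (LinearMap.ringLmapEquivSelf A A A).length_eq
  rw [h5, h2] at h1
  rw [← LinearMap.range_eq_top]
  by_contra hne
  have hfin : Module.length A (I →ₗ[A] A) ≠ ⊤ := 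
    ne_top_of_le_ne_top Module.length_ne_top h4
  have hfl := Module.length_ne_top_iff.1 hfin
  have := isFiniteLength_iff_isNoetherian_isArtinian.1 hfl
  obtain ⟨_, _⟩ := this
  have h6 := Submodule.length_lt hne
  have h7 : Module.length A (A ⧸ I) ≠ ⊤ := Module.length_ne_top
  have h8 : Module.length A I + Module.length A (A ⧸ I) < Module.length A I + Module.length A (A ⧸ I) := by
    calc _ = _ := h1
      _ ≤ Module.length A (A ⧸ I) + _ := by gcongr
      _ < Module.length A (A ⧸ I) + Module.length A (I →ₗ[A] A) := by
        exact (ENat.add_lt_add_iff_left h7).2 h6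
      _ ≤ _ := by rw [add_comm]; gcongr
  exact lt_irrefl _ h8
end

end PartE

section PartF
open scoped TensorProduct

section
variable {D : Type u} [CommRing D] [IsNoetherianRing D] [IsLocalRing D] {n : ℕ} (x : Fin n → D)
  (hx : Ideal.span (Set.range x) = IsLocalRing.maximalIdeal D)
  (hdim : (n : WithBot ℕ∞) ≤ ringKrullDim D) (t : ℕ) (ht : 0 < t)

include hx ht in
omit [IsNoetherianRing D] in
lemma powI_le : Ideal.span (Set.range fun i => x i ^ t) ≤ IsLocalRing.maximalIdeal D := by
  rw [Ideal.span_le]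
  rintro _ ⟨i, rfl⟩
  exact Ideal.pow_mem_of_mem _ (hx ▸ Ideal.subset_span ⟨i, rfl⟩) t ht

include hx in
omit [IsNoetherianRing D] in
lemma powI_le_pow : Ideal.span (Set.range fun i => x i ^ t) ≤ IsLocalRing.maximalIdeal D ^ t := by
  rw [Ideal.span_le]
  rintro _ ⟨i, rfl⟩
  exact Ideal.pow_mem_pow (hx ▸ Ideal.subset_span ⟨i, rfl⟩) t

include hx in
lemma pow_le_powI : ∃ k, IsLocalRing.maximalIdeal D ^ k ≤ Ideal.span (Set.range fun i => x i ^ t) := by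
  apply Ideal.exists_pow_le_of_le_radical_of_fg
  · rw [← hx, Ideal.span_le]
    rintro _ ⟨i, rfl⟩
    exact ⟨t, Ideal.subset_span ⟨i, rfl⟩⟩
  · exact IsNoetherian.noetherian _

include hx ht in
omit [IsNoetherianRing D] in
lemma mul_prod_mem (y : D) (hy : y ∈ IsLocalRing.maximalIdeal D) :
    y * ∏ i, x i ^ (t-1) ∈ Ideal.span (Set.range fun i => x i ^ t) := by
  rw [← hx] at hy
  induction hy using Submodule.span_induction with
  | mem y h =>
    obtain ⟨i, rfl⟩ := h
    rw [← Finset.mul_prod_erase _ _ (Finset.mem_univ i), ← mul_assoc, ← pow_succ',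
      Nat.sub_add_cancel ht]
    exact Ideal.mul_mem_right _ _ (Ideal.subset_span ⟨i, rfl⟩)
  | zero => simp
  | add a b _ _ ha hb => rw [add_mul]; exact add_mem ha hb
  | smul a b _ hb => rw [smul_eq_mul, mul_assoc]; exact Ideal.mul_mem_left _ _ hb

include hx hdim ht in
lemma ess_core (b : D) (hb : b ∉ Ideal.span (Set.range fun i => x i ^ t)) :
    ∃ c e, c * b ∉ Ideal.span (Set.range fun i => x i ^ t) ∧
      c * b - (∏ i, x i ^ (t-1)) * e ∈ Ideal.span (Set.range fun i => x i ^ t) := by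
  classical
  set J := Ideal.span (Set.range fun i => x i ^ t) with hJ
  have hex : ∃ k, ∀ c ∈ IsLocalRing.maximalIdeal D ^ k, c * b ∈ J := by
    obtain ⟨k, hk⟩ := pow_le_powI x hx t
    exact ⟨k, fun c hc => Ideal.mul_mem_right _ _ (hk hc)⟩
  have hk := Nat.find_spec hex
  have hmin := fun m => @Nat.find_min _ _ hex m
  set k := Nat.find hex
  obtain _ | k := k
  · exact absurd (by simpa using hk 1 (by simp)) hb
  · have := hmin k (Nat.lt_succ_self k)
    push Not at this
    obtain ⟨c, hc, hcb⟩ := this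
    obtain ⟨e, he⟩ := socle_regular x hx hdim t ht (c * b) (fun i => by
      rw [← mul_assoc]
      apply hk
      rw [pow_succ']
      exact Ideal.mul_mem_mul (hx ▸ Ideal.subset_span ⟨i, rfl⟩) hc)
    exact ⟨c, e, hcb, he⟩

include hx hdim ht in
lemma prod_not_mem : (∏ i, x i ^ (t-1)) ∉ Ideal.span (Set.range fun i => x i ^ t) := by
  intro h
  obtain ⟨c, e, h1, h2⟩ := ess_core x hx hdim t ht 1 (fun h =>
    (Ideal.ne_top_iff_one _).1 (IsLocalRing.maximalIdeal.isMaximal D).ne_top (powI_le x hx t ht h))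
  apply h1
  have := add_mem h2 (Ideal.mul_mem_right e _ h)
  simpa using this

include hx hdim ht in
lemma prod_mem_sup (b : D) (hb : b ∉ Ideal.span (Set.range fun i => x i ^ t)) :
    (∏ i, x i ^ (t-1)) ∈ Ideal.span (Set.range fun i => x i ^ t) ⊔ Ideal.span {b} := by
  obtain ⟨c, e, h1, h2⟩ := ess_core x hx hdim t ht b hb
  have he : IsUnit e := by
    by_contra he
    apply h1
    have h3 := mul_prod_mem x hx t ht e he
    have := add_mem h2 h3
    rwa [mul_comm e, sub_add_cancel] at this
  obtain ⟨e, rfl⟩ := he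
  have h4 : (∏ i, x i ^ (t-1)) = - ((e⁻¹ : Dˣ) : D) * (c * b - (∏ i, x i ^ (t-1)) * e) + ((e⁻¹ : Dˣ) : D) * c * b := by
    have : (e : D) * ((e⁻¹ : Dˣ) : D) = 1 := by simp
    linear_combination (- ∏ i, x i ^ (t-1)) * this
  rw [h4]
  refine add_mem (Ideal.mem_sup_left (Ideal.mul_mem_left _ _ h2)) (Ideal.mem_sup_right ?_)
  exact Ideal.mul_mem_left _ _ (Ideal.mem_span_singleton_self b)

include hx hdim ht in
lemma baer_quot : Module.Baer (D ⧸ Ideal.span (Set.range fun i => x i ^ t))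
    (D ⧸ Ideal.span (Set.range fun i => x i ^ t)) := by
  set J := Ideal.span (Set.range fun i => x i ^ t) with hJ
  have := isLocalRing_quot J (powI_le x hx t ht)
  have hmax := maximalIdeal_quot J
  have : IsArtinianRing (D ⧸ J) := by
    rw [isArtinianRing_iff_isNilpotent_maximalIdeal]
    obtain ⟨k, hk⟩ := pow_le_powI x hx t
    refine ⟨k, ?_⟩
    rw [hmax, ← Ideal.map_pow, Ideal.zero_eq_bot, Ideal.map_eq_bot_iff_le_ker, Ideal.mk_ker]
    exact hk
  refine baer_self (Ideal.Quotient.mk J (∏ i, x i ^ (t-1))) ?_ ?_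
  · intro a ha
    obtain ⟨a, rfl⟩ := Ideal.Quotient.mk_surjective a
    obtain ⟨b, hb⟩ := socle_regular x hx hdim t ht a (fun i => by
      rw [← hJ, ← Ideal.Quotient.eq_zero_iff_mem, map_mul]
      apply ha
      rw [hmax]
      exact Ideal.mem_map_of_mem _ (hx ▸ Ideal.subset_span ⟨i, rfl⟩))
    rw [Ideal.mem_span_singleton']
    refine ⟨Ideal.Quotient.mk J b, ?_⟩
    rw [← map_mul, mul_comm b]
    exact (Ideal.Quotient.eq.2 hb).symm
  · intro y hy
    rw [hmax, Ideal.mem_map_iff_of_surjective _ Ideal.Quotient.mk_surjective] at hy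
    obtain ⟨y, hy, rfl⟩ := hy
    rw [← map_mul, Ideal.Quotient.eq_zero_iff_mem]
    exact mul_prod_mem x hx t ht y hy
end

section
variable {D : Type u} [CommRing D] [IsNoetherianRing D] [IsLocalRing D] {n : ℕ} (x : Fin n → D)
  (hx : Ideal.span (Set.range x) = IsLocalRing.maximalIdeal D)
  (hdim : (n : WithBot ℕ∞) ≤ ringKrullDim D)

include hx hdim in
lemma exists_sep {M : Type u} [AddCommGroup M] [Module D M] [Module.Finite D M]
    (N : Submodule D M) (v : M) (hv : v ∉ N) :
    ∃ t, 0 < t ∧ ∃ φ : M →ₗ[D] D ⧸ Ideal.span (Set.range fun i => x i ^ t),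
      N ≤ LinearMap.ker φ ∧ φ v ≠ 0 := by
  set m := IsLocalRing.maximalIdeal D with hm
  have hH : IsHausdorff m (M ⧸ N) := IsHausdorff.of_isLocalRing m (M ⧸ N) (IsLocalRing.maximalIdeal.isMaximal D).ne_top
  have hk : ∃ k, (N.mkQ v) ∉ (m ^ k • ⊤ : Submodule D (M ⧸ N)) := by
    by_contra h
    push Not at h
    apply hv
    have := hH.haus (N.mkQ v) (fun k => by rw [SModEq.zero]; exact h k)
    simpa using this
  obtain ⟨k, hk⟩ := hk
  have hk0 : 0 < k := by
    rcases Nat.eq_zero_or_pos k with rfl | h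
    · simp at hk
    · exact h
  refine ⟨k, hk0, ?_⟩
  set J := Ideal.span (Set.range fun i => x i ^ k) with hJ
  have hJk : J ≤ m ^ k := powI_le_pow x hx k
  have hB := baer_quot x hx hdim k hk0
  rw [← hJ] at hB
  let P : Submodule D (M ⧸ N) := m ^ k • ⊤
  let W := (M ⧸ N) ⧸ P
  have htor : Module.IsTorsionBySet D W (J : Set D) := by
    rintro w ⟨a, ha⟩
    obtain ⟨w, rfl⟩ := P.mkQ_surjective w
    change a • _ = _
    rw [← map_smul, Submodule.mkQ_apply, Submodule.Quotient.mk_eq_zero]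
    exact Submodule.smul_mem_smul (hJk ha) trivial
  let _ : Module (D ⧸ J) W := htor.module
  have : IsScalarTower D (D ⧸ J) W := htor.isScalarTower
  let w : W := P.mkQ (N.mkQ v)
  have hw : w ≠ 0 := by
    intro h
    exact hk ((Submodule.Quotient.mk_eq_zero P).1 h)
  have := isLocalRing_quot J (powI_le x hx k hk0)
  have hmax := maximalIdeal_quot J
  let f0 : (D ⧸ J) →ₗ[D ⧸ J] W := LinearMap.toSpanSingleton _ _ w
  let L : Ideal (D ⧸ J) := LinearMap.ker f0
  have hL : L ≤ IsLocalRing.maximalIdeal (D ⧸ J) := by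
    apply IsLocalRing.le_maximalIdeal
    intro h
    apply hw
    have : (1 : D ⧸ J) ∈ L := h ▸ trivial
    rw [LinearMap.mem_ker] at this
    simpa [f0] using this
  let s : D ⧸ J := Ideal.Quotient.mk J (∏ i, x i ^ (k-1))
  let f : ((D ⧸ J) ⧸ L) →ₗ[D ⧸ J] W := Submodule.liftQ L f0 le_rfl
  have hf : Function.Injective f := LinearMap.ker_eq_bot.1 (Submodule.ker_liftQ_eq_bot' _ _ rfl)
  let g : ((D ⧸ J) ⧸ L) →ₗ[D ⧸ J] (D ⧸ J) := Submodule.liftQ L (LinearMap.toSpanSingleton _ _ s) (by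
    intro y hy
    replace hy := hL hy
    rw [hmax, Ideal.mem_map_iff_of_surjective _ Ideal.Quotient.mk_surjective] at hy
    obtain ⟨y, hy, rfl⟩ := hy
    rw [LinearMap.mem_ker, LinearMap.toSpanSingleton_apply, smul_eq_mul, ← map_mul,
      Ideal.Quotient.eq_zero_iff_mem]
    exact mul_prod_mem x hx k hk0 y hy)
  obtain ⟨h, hh⟩ := hB.extension_property f hf g
  refine ⟨(h.restrictScalars D) ∘ₗ P.mkQ ∘ₗ N.mkQ, ?_, ?_⟩
  · intro y hy
    rw [LinearMap.mem_ker, LinearMap.comp_apply, LinearMap.comp_apply]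
    rw [show N.mkQ y = 0 by simpa using hy, map_zero, map_zero]
  · have e1 : f (Submodule.mkQ L 1) = w := by
      change f0 1 = w
      simp [f0]
    have e2 : g (Submodule.mkQ L 1) = s := by
      change (LinearMap.toSpanSingleton (D ⧸ J) (D ⧸ J) s) 1 = s
      simp
    change h w ≠ 0
    rw [← e1, ← LinearMap.comp_apply, hh, e2]
    intro h0
    exact prod_not_mem x hx hdim k hk0 (Ideal.Quotient.eq_zero_iff_mem.1 h0)

include hx hdim in
lemma ker_closed (hdim' : ringKrullDim D = n) {M : Type u} [AddCommGroup M] [Module D M]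
    (t : ℕ) (ht : 0 < t)
    (J : Ideal D) (hJ : J = Ideal.span (Set.range fun i => x i ^ t)) (φ : M →ₗ[D] D ⧸ J) (u : M)
    (S : Type u) [CommRing S] [Algebra D S] 
    (hu : IsForcingAlgebra D M (LinearMap.ker φ) u S) (hS : IsRobustOver D S) : φ u = 0 := by
  have hQ := hS n x hdim' (by
    rw [hx, (IsLocalRing.maximalIdeal.isMaximal D).isPrime.radical]
    exact IsLocalRing.maximalIdeal.isMaximal D)
  by_contra hne
  refine not_qseq_of_prod_mem _ t ht ?_ hQ
  obtain ⟨b, hb⟩ := Ideal.Quotient.mk_surjective (φ u)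
  have hbJ : b ∉ J := by rwa [← Ideal.Quotient.eq_zero_iff_mem, hb]
  have hp := prod_mem_sup x hx hdim t ht b (hJ ▸ hbJ)
  rw [← hJ] at hp
  -- evaluation map S ⊗ M → S / JS
  let JS : Ideal S := J.map (algebraMap D S)
  have hJS : JS = Ideal.span (Set.range fun i => algebraMap D S (x i) ^ t) := by
    simp only [JS, hJ, Ideal.map_span, ← Set.range_comp]
    congr 2
    ext i
    simp
  rw [← hJS]
  let ψ0 : (D ⧸ J) →ₗ[D] (S ⧸ JS) := Submodule.liftQ J (Algebra.linearMap D (S ⧸ JS)) (by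
    intro y hy
    rw [LinearMap.mem_ker, Algebra.linearMap_apply, IsScalarTower.algebraMap_apply D S (S ⧸ JS),
      Ideal.Quotient.algebraMap_eq, Ideal.Quotient.eq_zero_iff_mem]
    exact Ideal.mem_map_of_mem _ hy)
  let Ψ : (S ⊗[D] M) →ₗ[S] (S ⧸ JS) := TensorProduct.AlgebraTensorModule.lift
    ((LinearMap.lsmul S ((M →ₗ[D] (S ⧸ JS)))).flip (ψ0 ∘ₗ φ) : _) 
  have hΨ : ∀ (s : S) (m : M), Ψ (s ⊗ₜ m) = s • ψ0 (φ m) := fun s m => rfl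
  have hker : (LinearMap.ker φ).baseChange S ≤ LinearMap.ker Ψ := by
    rw [Submodule.baseChange_eq_span, Submodule.span_le]
    rintro _ ⟨y, hy, rfl⟩
    change Ψ (1 ⊗ₜ y) = 0
    rw [hΨ, LinearMap.mem_ker.1 hy, map_zero, smul_zero]
  have h1 := hker hu
  rw [LinearMap.mem_ker, hΨ, one_smul, ← hb] at h1
  have h2 : algebraMap D S b ∈ JS := by
    rw [← Ideal.Quotient.eq_zero_iff_mem]
    exact h1
  have h3 := Ideal.mem_map_of_mem (algebraMap D S) hp
  rw [map_prod] at h3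
  simp only [map_pow] at h3
  refine (?_ : Ideal.map (algebraMap D S) _ ≤ JS) h3
  rw [Ideal.map_sup, Ideal.map_span _ {b}, Set.image_singleton, sup_le_iff, Ideal.span_singleton_le_iff_mem]
  exact ⟨le_rfl, h2⟩

include hx in
theorem robustClosureCLD_eq (hdim' : ringKrullDim D = n) {M : Type u} [AddCommGroup M] [Module D M]
    [Module.Finite D M] (N : Submodule D M) : robustClosureCLD D M N ≤ N := by
  intro v hv
  by_contra hvN
  obtain ⟨t, ht, φ, hN, hφ⟩ := exists_sep x hx hdim'.ge N v hvN
  have hstep : ∀ N' ≤ LinearMap.ker φ, immediateRobustClosure D M N' ≤ LinearMap.ker φ := by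
    intro N' hN'
    refine sup_le hN' ?_
    rw [Submodule.span_le]
    rintro u ⟨S, _, _, hf, hr⟩
    refine ker_closed x hx hdim'.ge hdim' t ht _ rfl φ u S ?_ hr
    exact Submodule.baseChange_mono S hN' hf
  have hle : robustClosureCLD D M N ≤ LinearMap.ker φ := by
    refine iSup_le fun j => ?_
    induction j with
    | zero => exact hN
    | succ j ih =>
      rw [Function.iterate_succ_apply']
      exact hstep _ ih
  exact hφ (hle hv)
end

end PartF

section PartG
open scoped TensorProduct

lemma exists_surj_completion {P R : Type*} [CommRing P] [CommRing R] (φ : P →+* R)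
    (hφ : Function.Surjective φ) (I : Ideal P) (m : Ideal R) (hm : I.map φ = m) :
    ∃ Φ : AdicCompletion I P →+* AdicCompletion m R, Function.Surjective Φ := by
  have hpow : ∀ k, (I ^ k).map φ = m ^ k := fun k => by rw [Ideal.map_pow, hm]
  let q : (k : ℕ) → (P ⧸ I ^ k) →+* (R ⧸ m ^ k) := fun k =>
    Ideal.quotientMap (m ^ k) φ (Ideal.map_le_iff_le_comap.1 (hpow k).le)
  let f : (k : ℕ) → AdicCompletion I P →+* (R ⧸ m ^ k) := fun k =>
    (q k).comp (AdicCompletion.evalₐ I k).toRingHom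
  have hf : ∀ {k l : ℕ} (hle : k ≤ l), (Ideal.Quotient.factorPow m hle).comp (f l) = f k := by
    intro k l hle
    ext x
    obtain ⟨x, rfl⟩ := AdicCompletion.mk_surjective I P x
    change Ideal.Quotient.factorPow m hle (q l (AdicCompletion.evalₐ I l (AdicCompletion.mk I P x)))
      = q k (AdicCompletion.evalₐ I k (AdicCompletion.mk I P x))
    rw [AdicCompletion.evalₐ_mk, AdicCompletion.evalₐ_mk]
    change Ideal.Quotient.mk (m ^ k) (φ (x l)) = Ideal.Quotient.mk (m ^ k) (φ (x k))
    have h1 := AdicCompletion.Ideal.mk_eq_mk I hle x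
    have := congrArg (q k) h1
    exact this
  refine ⟨AdicCompletion.liftRingHom m f hf, ?_⟩
  intro y
  obtain ⟨y, rfl⟩ := AdicCompletion.mk_surjective m R y
  have hstep : ∀ k, ∃ i ∈ I ^ k, φ i = y (k+1) - y k := by
    intro k
    have h1 : y (k+1) - y k ∈ m ^ k := by
      have := AdicCompletion.Ideal.mk_eq_mk m (Nat.le_succ k) y
      exact Ideal.Quotient.eq.1 this
    rw [← hpow k, Ideal.mem_map_iff_of_surjective _ hφ] at h1
    exact h1
  choose i hi hi' using hstep
  obtain ⟨p0, hp0⟩ := hφ (y 0)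
  let p : ℕ → P := fun k => Nat.rec p0 (fun k pk => pk + i k) k
  have hp : ∀ k, φ (p k) = y k := by
    intro k
    induction k with
    | zero => exact hp0
    | succ k ih =>
      change φ (p k + i k) = _
      rw [map_add, ih, hi', add_sub_cancel]
  let s : AdicCompletion.AdicCauchySequence I P := AdicCompletion.AdicCauchySequence.mk I P p (by
    intro k
    refine SModEq.symm (SModEq.sub_mem.2 ?_)
    change p k + i k - p k ∈ _
    rw [add_sub_cancel_left]
    simpa using hi k)
  refine ⟨AdicCompletion.mk I P s, ?_⟩
  apply AdicCompletion.ext_evalₐ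
  intro k
  rw [AdicCompletion.evalₐ_liftRingHom, AdicCompletion.evalₐ_mk]
  change q k (AdicCompletion.evalₐ I k (AdicCompletion.mk I P s)) = _
  rw [AdicCompletion.evalₐ_mk]
  change Ideal.Quotient.mk _ (φ (p k)) = _
  rw [hp]

theorem isNoetherianRing_completion {R : Type u} [CommRing R] [IsNoetherianRing R] (m : Ideal R) :
    IsNoetherianRing (AdicCompletion m R) := by
  obtain ⟨n, x, hx⟩ := Submodule.fg_iff_exists_fin_generating_family.1 (IsNoetherian.noetherian m)
  let φ : MvPolynomial (Fin n) R →+* R := (MvPolynomial.aeval x).toRingHom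
  have hφ : Function.Surjective φ := fun r => ⟨MvPolynomial.C r, by simp [φ]⟩
  obtain ⟨Φ, hΦ⟩ := exists_surj_completion φ hφ (MvPolynomial.idealOfVars (Fin n) R) m (by
    rw [Ideal.map_span, ← Set.range_comp, ← hx]
    congr 2
    ext i
    simp [φ])
  have := isNoetherianRing_of_ringEquiv _ (MvPowerSeries.toAdicCompletionAlgEquiv (Fin n) R).toRingEquiv
  exact isNoetherianRing_of_surjective _ _ Φ hΦ

end PartG

section PartH
open scoped TensorProduct

lemma colon_map_eq_top {R D M : Type u} [CommRing R] [CommRing D] [Algebra R D] [Module.Flat R D]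
    [AddCommGroup M] [Module R M] (N : Submodule R M) (u : M)
    (h : (1 : D) ⊗ₜ[R] u ∈ N.baseChange D) :
    Ideal.map (algebraMap R D) (LinearMap.ker (LinearMap.toSpanSingleton R (M ⧸ N) (N.mkQ u)) : Ideal R) = ⊤ := by
  set g := LinearMap.toSpanSingleton R (M ⧸ N) (N.mkQ u) with hg
  set L : Ideal R := LinearMap.ker g with hL
  let f : (R ⧸ L) →ₗ[R] M ⧸ N := Submodule.liftQ L g le_rfl
  have hf : Function.Injective f := LinearMap.ker_eq_bot.1 (Submodule.ker_liftQ_eq_bot' _ _ rfl)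
  have hf' := Module.Flat.lTensor_preserves_injective_linearMap (M := D) f hf
  have h0 : (N.mkQ).baseChange D ((1 : D) ⊗ₜ[R] u) = 0 := by
    have hle : N.baseChange D ≤ LinearMap.ker ((N.mkQ).baseChange D) := by
      rw [Submodule.baseChange_eq_span, Submodule.span_le]
      rintro _ ⟨y, hy, rfl⟩
      have hy' : N.mkQ y = 0 := by simpa using hy
      change (N.mkQ).baseChange D (1 ⊗ₜ y) = 0
      rw [LinearMap.baseChange_tmul, hy', TensorProduct.tmul_zero]
    exact hle h
  rw [LinearMap.baseChange_tmul] at h0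
  have h1 : (1 : D) ⊗ₜ[R] (Ideal.Quotient.mk L 1) = 0 := by
    apply hf'
    rw [LinearMap.lTensor_tmul, map_zero]
    rw [show f (Ideal.Quotient.mk L 1) = N.mkQ u from by
      change g 1 = _
      simp [hg], h0]
  let ψ0 : (R ⧸ L) →ₗ[R] (D ⧸ L.map (algebraMap R D)) :=
    Submodule.liftQ L (Algebra.linearMap R (D ⧸ L.map (algebraMap R D))) (by
      intro y hy
      rw [LinearMap.mem_ker, Algebra.linearMap_apply,
        IsScalarTower.algebraMap_apply R D (D ⧸ L.map (algebraMap R D)),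
        Ideal.Quotient.algebraMap_eq, Ideal.Quotient.eq_zero_iff_mem]
      exact Ideal.mem_map_of_mem _ hy)
  let Ψ : (D ⊗[R] (R ⧸ L)) →ₗ[D] (D ⧸ L.map (algebraMap R D)) := 
    TensorProduct.AlgebraTensorModule.lift
      ((LinearMap.lsmul D (((R ⧸ L) →ₗ[R] (D ⧸ L.map (algebraMap R D))))).flip ψ0 : _) 
  have h2 := congrArg Ψ h1
  rw [map_zero] at h2
  have h3 : Ψ ((1 : D) ⊗ₜ[R] (Ideal.Quotient.mk L 1)) = 1 := by
    change (1 : D) • ψ0 (Ideal.Quotient.mk L 1) = 1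
    rw [one_smul]
    change algebraMap R (D ⧸ L.map (algebraMap R D)) 1 = 1
    simp
  rw [h3, ← map_one (Ideal.Quotient.mk _), Ideal.Quotient.eq_zero_iff_mem] at h2
  exact (Ideal.eq_top_iff_one _).2 h2

lemma dim_completion {R : Type u} [CommRing R] [IsNoetherianRing R] [IsLocalRing R] :
    ringKrullDim R ≤ ringKrullDim (AdicCompletion (IsLocalRing.maximalIdeal R) R) := by
  have := isNoetherianRing_completion (IsLocalRing.maximalIdeal R)
  rw [← IsLocalRing.maximalIdeal_height_eq_ringKrullDim, ← IsLocalRing.maximalIdeal_height_eq_ringKrullDim]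
  have : (IsLocalRing.maximalIdeal (AdicCompletion (IsLocalRing.maximalIdeal R) R)).LiesOver
    (IsLocalRing.maximalIdeal R) := ⟨(IsLocalRing.maximalIdeal_comap _).symm⟩
  have := Algebra.HasGoingDown.of_flat (R := R) (S := AdicCompletion (IsLocalRing.maximalIdeal R) R)
  rw [Ideal.height_eq_height_add_of_liesOver_of_hasGoingDown (IsLocalRing.maximalIdeal R)
    (IsLocalRing.maximalIdeal (AdicCompletion (IsLocalRing.maximalIdeal R) R))]
  exact_mod_cast le_self_add

section
variable (R : Type u) [CommRing R] [IsNoetherianRing R]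
    (hreg : ∀ (p : Ideal R) (hp : p.IsPrime),
      haveI : p.IsPrime := hp
      ∃ (n : ℕ) (x : Fin n → Localization.AtPrime p),
        Ideal.span (Set.range x) = IsLocalRing.maximalIdeal (Localization.AtPrime p) ∧
        ringKrullDim (Localization.AtPrime p) = n)

include hreg in
theorem main_aux
    (M : Type u) [AddCommGroup M] [Module R M] [Module.Finite R M]
    (N : Submodule R M) :
    ∀ u : M, MemRobustClosure R M N u ↔ u ∈ N := by
  intro u
  constructor
  swap
  · intro hu D _ _ _
    refine (le_iSup (fun j : ℕ => (immediateRobustClosure D (D ⊗[R] M))^[j] (N.baseChange D)) 0) ?_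
    exact Submodule.tmul_mem_baseChange_of_mem _ hu
  intro hu
  by_contra huN
  set L : Ideal R := LinearMap.ker (LinearMap.toSpanSingleton R (M ⧸ N) (N.mkQ u)) with hL
  have hLtop : L ≠ ⊤ := by
    intro h
    have h1 : (1 : R) ∈ L := h ▸ trivial
    rw [hL, LinearMap.mem_ker] at h1
    exact huN (by simpa using h1)
  obtain ⟨m, hm, hLm⟩ := Ideal.exists_le_maximal L hLtop
  have hmp : m.IsPrime := hm.isPrime
  obtain ⟨n, x, hx, hdim⟩ := hreg m hmp
  have hloc : IsNoetherianRing (Localization.AtPrime m) := IsLocalization.isNoetherianRing m.primeCompl _ inferInstance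
  set 𝔪 := IsLocalRing.maximalIdeal (Localization.AtPrime m) with h𝔪
  let D := AdicCompletion 𝔪 (Localization.AtPrime m)
  have hDN : IsNoetherianRing D := isNoetherianRing_completion _
  have hDL : IsLocalRing D := inferInstanceAs (IsLocalRing (AdicCompletion (IsLocalRing.maximalIdeal _) (Localization.AtPrime m)))
  have hmax : IsLocalRing.maximalIdeal D = 𝔪.map (algebraMap _ D) :=
    AdicCompletion.maximalIdeal_eq_map
  let y : Fin n → D := fun i => algebraMap _ D (x i)
  have hy : Ideal.span (Set.range y) = IsLocalRing.maximalIdeal D := by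
    have hx' := congrArg (Ideal.map (algebraMap (Localization.AtPrime m) D)) hx
    rw [hmax, ← hx', Ideal.map_span, ← Set.range_comp]
    rfl
  have hge : (n : WithBot ℕ∞) ≤ ringKrullDim D := hdim ▸ dim_completion
  classical
  have hys : Ideal.span ((Finset.univ.image y : Finset D) : Set D) = IsLocalRing.maximalIdeal D := by
    rw [← hy]; simp
  have hcard : (Finset.univ.image y).card ≤ n := by
    simpa using Finset.card_image_le (s := Finset.univ) (f := y)
  have hle : ringKrullDim D ≤ n := (dim_le_card _ hys).trans (by exact_mod_cast hcard)
  have hdimD : ringKrullDim D = n := le_antisymm hle hge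
  have hDD : IsDomain D := isDomain_of_regular n D _ hcard hys hge
  have htow : IsScalarTower R (Localization.AtPrime m) D := inferInstance
  have hcld : IsCompleteLocalDomainOf R D := by
    refine ⟨m, hm, ⊥, ?_, (RingEquiv.quotientBot D).symm, ?_⟩
    · have : minimalPrimes D = {⊥} := IsDomain.minimalPrimes_eq_singleton_bot D
      exact this ▸ rfl
    · intro r
      rw [IsScalarTower.algebraMap_apply R (Localization.AtPrime m) D]
      rfl
  have h1 := robustClosureCLD_eq y hy hdimD _ (hu D hcld)
  have hflat : Module.Flat (Localization.AtPrime m) D := AdicCompletion.flat_of_isNoetherian _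
  have hflat1 : Module.Flat R (Localization.AtPrime m) := IsLocalization.flat _ m.primeCompl
  have hflat2 : Module.Flat R D := Module.Flat.trans R (Localization.AtPrime m) D
  have h2 := colon_map_eq_top N u h1
  rw [← hL] at h2
  have h3 : L.map (algebraMap R D) ≤ IsLocalRing.maximalIdeal D := by
    refine (Ideal.map_mono hLm).trans ?_
    rw [IsScalarTower.algebraMap_eq R (Localization.AtPrime m) D, ← Ideal.map_map, hmax,
      Localization.AtPrime.map_eq_maximalIdeal]
  rw [h2] at h3
  exact (IsLocalRing.maximalIdeal.isMaximal D).ne_top (top_le_iff.1 h3)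
end

end PartH

end RobustProof

/-- If `R` is a regular Noetherian ring (every localization at a
prime is a regular local ring, i.e. the maximal ideal of the localization is generated
by `dim` many elements), then every finitely generated submodule `N ⊆ M` is robustly
closed: the robust closure of `N` in `M` equals `N`. -/
theorem robustClosure_eq_self_of_regular
    (R : Type u) [CommRing R] [IsNoetherianRing R]
    (hreg : ∀ (p : Ideal R) (hp : p.IsPrime),
      haveI : p.IsPrime := hp
      ∃ (n : ℕ) (x : Fin n → Localization.AtPrime p),
        Ideal.span (Set.range x) = IsLocalRing.maximalIdeal (Localization.AtPrime p) ∧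
        ringKrullDim (Localization.AtPrime p) = n)
    (M : Type u) [AddCommGroup M] [Module R M] [Module.Finite R M]
    (N : Submodule R M) :
    ∀ u : M, MemRobustClosure R M N u ↔ u ∈ N := by
  exact main_aux R hreg M N
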